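/- Let θ̂ ~ N(θ₀, V/n) in ℝᵏ with V positive definite and symmetric, g(θ) = a'θ + b with a not a scalar multiple of e₁ (the first standard basis vector), and suppose g(θ₀) ≤ 0. Define ŝ = n^{−1/2}(e₁'Ve₁)^{1/2}, the equality-imposed estimator θ̈ = θ̂ − Va(a'Va)⁻¹g(θ̂), its standard error s̈ = n^{−1/2}(e₁'Ve₁ − e₁'Va(a'Va)⁻¹a'Ve₁)^{1/2}, the threshold c̈ = (e₁'Va)⁻¹(a'Va)(ŝ − s̈)z_{1−α/2} if e₁'Va ≠ 0 and c̈ = 0 otherwise, and the interval [ℓ, u] with ℓ = e₁'θ̂ − ŝ·z_{1−α/2} if g(θ̂) ≤ c̈ and ℓ = e₁'θ̈ − s̈·z_{1−α/2} otherwise; u = e₁'θ̂ + ŝ·z_{1−α/2} if g(θ̂) ≤ −c̈ and u = e₁'θ̈ + s̈·z_{1−α/2} otherwise. Then P(e₁'θ₀ ∈ [ℓ, u]) ≥ 1 − α, with equality if g(θ₀) = 0. -/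

import Mathlib

open MeasureTheory ProbabilityTheory Matrix

/-- Standard normal CDF. -/
noncomputable def stdNormalCDF (t : ℝ) : ℝ :=
  ((gaussianReal 0 1) (Set.Iic t)).toReal


/-- A linear functional of a standard Gaussian vector is centred normal. -/
lemma map_dotProduct_pi_gaussianReal {ι : Type*} [Fintype ι] (v : ι → ℝ) :
    (Measure.pi fun _ : ι => gaussianReal 0 1).map (fun w => v ⬝ᵥ w) =
      gaussianReal 0 (v ⬝ᵥ v).toNNReal := by
  have h : (fun w : ι → ℝ => v ⬝ᵥ w) =
      innerSL ℝ (WithLp.toLp 2 v) ∘ (WithLp.toLp 2 : (ι → ℝ) → EuclideanSpace ℝ ι) := by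
    ext w
    simp [PiLp.inner_apply, dotProduct, mul_comm]
  rw [h, ← Measure.map_map (by fun_prop) (by fun_prop), map_pi_eq_stdGaussian,
    IsGaussian.map_eq_gaussianReal, integral_strongDual_stdGaussian, variance_dual_stdGaussian,
    innerSL_apply_norm, EuclideanSpace.real_norm_sq_eq]
  simp [dotProduct, sq]

/-- Orthogonal linear functionals of a standard Gaussian vector are independent. -/
lemma indepFun_dotProduct_pi_gaussianReal {ι : Type*} [Fintype ι] {v u : ι → ℝ}
    (h : v ⬝ᵥ u = 0) :
    IndepFun (fun w : ι → ℝ => v ⬝ᵥ w) (fun w => u ⬝ᵥ w)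
      (Measure.pi fun _ : ι => gaussianReal 0 1) := by
  have hv : ∀ v : ι → ℝ, (fun w : ι → ℝ => v ⬝ᵥ w) =
      (fun x => inner ℝ (WithLp.toLp 2 v) x) ∘
        (WithLp.toLp 2 : (ι → ℝ) → EuclideanSpace ℝ ι) := by
    intro v
    ext w
    simp [PiLp.inner_apply, dotProduct, mul_comm]
  have hg : HasGaussianLaw (WithLp.toLp 2 : (ι → ℝ) → EuclideanSpace ℝ ι)
      (Measure.pi fun _ : ι => gaussianReal 0 1) :=
    ⟨by rw [map_pi_eq_stdGaussian]; infer_instance⟩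
  refine HasGaussianLaw.indepFun_of_covariance_eq_zero ?_ ?_
  · have := hg.map_fun ((innerSL ℝ (WithLp.toLp 2 v)).prod (innerSL ℝ (WithLp.toLp 2 u)))
    exact this.congr (.of_forall fun w =>
      Prod.ext (congrFun (hv v) w).symm (congrFun (hv u) w).symm)
  · rw [hv v, hv u, ← covariance_map (by fun_prop) (by fun_prop) (by fun_prop),
      map_pi_eq_stdGaussian, ← covarianceBilin_apply_eq_cov IsGaussian.memLp_two_id,
      covarianceBilin_stdGaussian, innerSL_apply_apply]
    simpa [PiLp.inner_apply, dotProduct, mul_comm] using h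

/-- Beyond a point `c ≥ 0`, a centred normal law is dominated by its reflection in `c`. -/
lemma gaussianReal_le_preimage_reflection {v : NNReal} (hv : v ≠ 0) {c : ℝ} (hc : 0 ≤ c)
    {B : Set ℝ} (hB : MeasurableSet B) (hBc : B ⊆ Set.Ici c) :
    gaussianReal 0 v B ≤ gaussianReal 0 v ((fun x => 2 * c - x) ⁻¹' B) := by
  rw [← Measure.map_apply (by fun_prop) hB, gaussianReal_map_const_sub, sub_zero,
    gaussianReal_apply _ hv, gaussianReal_apply _ hv]
  refine setLIntegral_mono' hB fun x hx => ENNReal.ofReal_le_ofReal ?_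
  have hx' : c ≤ x := hBc hx
  have hsq : -(x - 0) ^ 2 ≤ -(x - 2 * c) ^ 2 := by nlinarith
  rw [gaussianPDFReal, gaussianPDFReal]
  gcongr

/-- The bivariate version of `gaussianReal_le_preimage_reflection`. -/
lemma gaussianReal_prod_le_preimage_reflection {v : NNReal} (hv : v ≠ 0) (ρ : Measure ℝ)
    [SFinite ρ] {c : ℝ} (hc : 0 ≤ c) {B : Set (ℝ × ℝ)} (hB : MeasurableSet B)
    (hBc : ∀ x ∈ B, c ≤ x.1) :
    (gaussianReal 0 v).prod ρ B ≤
      (gaussianReal 0 v).prod ρ ((fun x => (2 * c - x.1, x.2)) ⁻¹' B) := by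
  have hm : Measurable fun x : ℝ × ℝ => (2 * c - x.1, x.2) := by fun_prop
  rw [Measure.prod_apply_symm hB, Measure.prod_apply_symm (hm hB)]
  refine lintegral_mono fun y => ?_
  exact gaussianReal_le_preimage_reflection hv hc (measurable_prodMk_right hB)
    fun x hx => hBc _ hx

/-- The symmetry properties of the law of a pair of standard normal variables used in the
comparison of confidence intervals at critical value `z`. -/
structure IsSymmPair (ν : Measure (ℝ × ℝ)) (z : ℝ) : Prop where
  map_snd : ν.map Prod.snd = gaussianReal 0 1
  neg : MeasurePreserving (fun x : ℝ × ℝ => -x) ν ν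
  swap : MeasurePreserving Prod.swap ν ν
  reflection : ∀ B : Set (ℝ × ℝ), MeasurableSet B → (∀ x ∈ B, 2 * z ≤ x.1 + x.2) →
    ν B ≤ ν ((fun x => (2 * z - x.2, 2 * z - x.1)) ⁻¹' B)

lemma isSymmPair_map_dotProduct {ι : Type*} [Fintype ι] {v u : ι → ℝ} (hv : v ⬝ᵥ v = 1)
    (hu : u ⬝ᵥ u = 1) (hvu : -1 < v ⬝ᵥ u) {z : ℝ} (hz : 0 ≤ z) :
    IsSymmPair ((Measure.pi fun _ : ι => gaussianReal 0 1).map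
      (fun w => (v ⬝ᵥ w, u ⬝ᵥ w))) z := by
  set P : Measure (ι → ℝ) := Measure.pi fun _ => gaussianReal 0 1
  have hdot : ∀ v : ι → ℝ, Measurable fun w : ι → ℝ => v ⬝ᵥ w := by
    intro v
    unfold dotProduct
    fun_prop
  have hS : (v + u) ⬝ᵥ (v + u) = 2 + 2 * v ⬝ᵥ u := by
    simp [add_dotProduct, dotProduct_add, hv, hu, dotProduct_comm u v]
    ring
  have horth : (v + u) ⬝ᵥ (v - u) = 0 := by
    simp [add_dotProduct, dotProduct_sub, hv, hu, dotProduct_comm u v]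
    ring
  set σ := ((v + u) ⬝ᵥ (v + u)).toNNReal
  set τ := ((v - u) ⬝ᵥ (v - u)).toNNReal
  have hσ : σ ≠ 0 := by
    simp only [σ, ne_eq, Real.toNNReal_eq_zero, not_le, hS]
    linarith
  have hjoint : P.map (fun w => ((v + u) ⬝ᵥ w, (v - u) ⬝ᵥ w)) =
      (gaussianReal 0 σ).prod (gaussianReal 0 τ) := by
    rw [(indepFun_iff_map_prod_eq_prod_map_map (hdot _).aemeasurable (hdot _).aemeasurable).1
      (indepFun_dotProduct_pi_gaussianReal horth), map_dotProduct_pi_gaussianReal,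
      map_dotProduct_pi_gaussianReal]
  set f : ℝ × ℝ → ℝ × ℝ := fun x => ((x.1 + x.2) / 2, (x.1 - x.2) / 2)
  have hf : Measurable f := by fun_prop
  have hlaw : P.map (fun w => (v ⬝ᵥ w, u ⬝ᵥ w)) =
      ((gaussianReal 0 σ).prod (gaussianReal 0 τ)).map f := by
    rw [← hjoint, Measure.map_map hf ((hdot _).prodMk (hdot _))]
    congr 1
    ext w <;> simp [f, add_dotProduct, sub_dotProduct]
  have hneg : ∀ s, MeasurePreserving (fun x : ℝ => -x) (gaussianReal 0 s) (gaussianReal 0 s) :=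
    fun s => ⟨by fun_prop, by simpa using gaussianReal_map_neg (μ := 0) (v := s)⟩
  have hfp : MeasurePreserving f ((gaussianReal 0 σ).prod (gaussianReal 0 τ))
      (P.map (fun w => (v ⬝ᵥ w, u ⬝ᵥ w))) := ⟨hf, hlaw.symm⟩
  refine ⟨?_, ?_, ?_, ?_⟩
  · rw [Measure.map_map measurable_snd ((hdot _).prodMk (hdot _))]
    have h := map_dotProduct_pi_gaussianReal u
    rw [hu, Real.toNNReal_one] at h
    exact h
  · refine hfp.of_semiconj ((hneg σ).prod (hneg τ)) ?_ (by fun_prop)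
    intro x
    ext <;> simp [f] <;> ring
  · refine hfp.of_semiconj ((MeasurePreserving.id _).prod (hneg τ)) ?_ (by fun_prop)
    intro x
    ext <;> simp [f] <;> ring
  · intro B hB hBz
    have hr : Measurable fun x : ℝ × ℝ => (2 * z - x.2, 2 * z - x.1) := by fun_prop
    rw [← hfp.measure_preimage hB.nullMeasurableSet,
      ← hfp.measure_preimage (hr hB).nullMeasurableSet]
    refine (gaussianReal_prod_le_preimage_reflection hσ (gaussianReal 0 τ)
      (c := 2 * z) (by linarith) (hf hB) ?_).trans_eq ?_
    · intro x hx
      have := hBz _ hx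
      simp only [f] at this
      linarith
    · congr 1
      ext x
      have : f (2 * (2 * z) - x.1, x.2) = (2 * z - (f x).2, 2 * z - (f x).1) := by
        ext <;> simp only [f] <;> ring
      simp only [Set.mem_preimage, this]

namespace IsSymmPair

variable {ν : Measure (ℝ × ℝ)} {z : ℝ}

lemma measure_snd_preimage (h : IsSymmPair ν z) {B : Set ℝ} (hB : MeasurableSet B) :
    ν (Prod.snd ⁻¹' B) = gaussianReal 0 1 B := by
  rw [← h.map_snd, Measure.map_apply measurable_snd hB]

lemma isProbabilityMeasure (h : IsSymmPair ν z) : IsProbabilityMeasure ν :=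
  ⟨by rw [← Set.preimage_univ, h.measure_snd_preimage .univ, measure_univ]⟩

lemma measure_fst_gt (h : IsSymmPair ν z) : ν {x | z < x.1} = ν {x | z < x.2} :=
  h.swap.measure_preimage (measurableSet_lt measurable_const measurable_snd).nullMeasurableSet

/-- The lines `x.1 = z` and `x.2 = z` bound two opposite wedges; along `x.2 = z`, the strip of
width `m` in one wedge is no more likely than the corresponding strip in the other. -/
lemma measure_strip_le (h : IsSymmPair ν z) (m : ℝ) :
    ν {x | x.2 ≤ z ∧ z < x.1 ∧ z - m < x.2} ≤ ν {x | x.1 ≤ z ∧ z < x.2 ∧ x.2 ≤ z + m} := by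
  have := h.isProbabilityMeasure
  have hswap : ν {x | x.2 ≤ z ∧ z < x.1 ∧ z - m < x.2} =
      ν {x | x.1 ≤ z ∧ z < x.2 ∧ z - m < x.1} :=
    h.swap.measure_preimage (s := {x | x.1 ≤ z ∧ z < x.2 ∧ z - m < x.1})
      (by measurability : MeasurableSet _).nullMeasurableSet
  set A : Set (ℝ × ℝ) := {x | x.1 ≤ z ∧ z < x.2 ∧ z - m < x.1}
  set B : Set (ℝ × ℝ) := {x | x.1 ≤ z ∧ z < x.2 ∧ x.2 ≤ z + m}
  have hA : MeasurableSet A := by measurability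
  have hB : MeasurableSet B := by measurability
  have hline : ν {x | x.2 = z} = 0 := by
    have : NullSingletonClass (gaussianReal 0 1) := nullSingletonClass_gaussianReal one_ne_zero
    exact (h.measure_snd_preimage (measurableSet_singleton z)).trans (measure_singleton z)
  have hdiff : ν (A \ B) ≤ ν (B \ A) := by
    calc ν (A \ B)
        ≤ ν ((fun x : ℝ × ℝ => (2 * z - x.2, 2 * z - x.1)) ⁻¹' (A \ B)) := by
          refine h.reflection _ (hA.diff hB) ?_
          rintro x ⟨⟨h1, h2, h3⟩, h4⟩
          by_contra! h5
          exact h4 ⟨h1, h2, by linarith⟩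
      _ ≤ ν (B \ A ∪ {x | x.2 = z}) := by
          refine measure_mono ?_
          rintro x ⟨⟨h1, h2, h3⟩, h4⟩
          simp only at h1 h2 h3
          rcases (show z ≤ x.2 by linarith).eq_or_lt with h5 | h5
          · exact Or.inr h5.symm
          · refine Or.inl ⟨⟨by linarith, h5, by linarith⟩, fun h6 => h4 ⟨h1, h2, ?_⟩⟩
            have := h6.2.2
            simp only
            linarith
      _ ≤ ν (B \ A) + 0 := hline ▸ measure_union_le _ _
      _ = ν (B \ A) := add_zero _
  rw [hswap, ← measure_inter_add_sdiff A hB, ← measure_inter_add_sdiff B hA, Set.inter_comm B A]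
  gcongr

/-- Clamping the increment from `s * (x.2 - z)` to `r * (x.1 - z)` does not increase the
probability of exceeding `0`. -/
lemma measure_clamp_le (h : IsSymmPair ν z) {r s m : ℝ} (hr : 0 < r) (hs : 0 < s) (hm : 0 ≤ m) :
    ν {x | 0 < s * (x.2 - z) + max (-m) (min (r * (x.1 - z) - s * (x.2 - z)) m)} ≤
      ν {x | z < x.2} := by
  set C : Set (ℝ × ℝ) :=
    {x | 0 < s * (x.2 - z) + max (-m) (min (r * (x.1 - z) - s * (x.2 - z)) m)}
  set Q : Set (ℝ × ℝ) := {x | z < x.2}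
  have hC : MeasurableSet C := measurableSet_lt (by fun_prop) (by fun_prop)
  have hQ : MeasurableSet Q := measurableSet_lt (by fun_prop) (by fun_prop)
  have h1 : C \ Q ⊆ {x | x.2 ≤ z ∧ z < x.1 ∧ z - m / s < x.2} := by
    rintro x ⟨hx, hxq⟩
    have hq : x.2 ≤ z := not_lt.1 hxq
    have hq' : s * (x.2 - z) ≤ 0 := mul_nonpos_of_nonneg_of_nonpos hs.le (by linarith)
    have hx' : -(s * (x.2 - z)) < max (-m) (min (r * (x.1 - z) - s * (x.2 - z)) m) := by
      linarith [show 0 < s * (x.2 - z) + _ from hx]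
    rcases lt_max_iff.1 hx' with h2 | h2
    · linarith
    · obtain ⟨h3, h4⟩ := lt_min_iff.1 h2
      refine ⟨hq, ?_, ?_⟩
      · have : 0 < x.1 - z := pos_of_mul_pos_right (by linarith : 0 < r * (x.1 - z)) hr.le
        linarith
      · have : z - x.2 < m / s := by rw [lt_div_iff₀ hs]; linarith
        linarith
  have h2 : {x : ℝ × ℝ | x.1 ≤ z ∧ z < x.2 ∧ x.2 ≤ z + m / s} ⊆ Q \ C := by
    rintro x ⟨hp, hq, hqm⟩
    refine ⟨hq, fun hx => ?_⟩
    have hq' : s * (x.2 - z) ≤ m := by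
      have : x.2 - z ≤ m / s := by linarith
      rw [le_div_iff₀ hs] at this
      linarith
    have hp' : r * (x.1 - z) ≤ 0 := mul_nonpos_of_nonneg_of_nonpos hr.le (by linarith)
    have hx' : -(s * (x.2 - z)) < max (-m) (min (r * (x.1 - z) - s * (x.2 - z)) m) := by
      linarith [show 0 < s * (x.2 - z) + _ from hx]
    rcases lt_max_iff.1 hx' with h3 | h3
    · linarith
    · have := (lt_min_iff.1 h3).1
      linarith
  rw [← measure_inter_add_sdiff C hQ, ← measure_inter_add_sdiff Q hC, Set.inter_comm Q C]
  refine add_le_add le_rfl ?_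
  exact (measure_mono h1).trans ((h.measure_strip_le _).trans (measure_mono h2))

/-- Coverage of the interval whose endpoints switch at `r * x.1 - s * x.2 = ±(r - s) * z + m`:
at least `1 - 2 * P(Z > z)`, with equality if `m = 0`. -/
lemma coverage (h : IsSymmPair ν z) (hz : 0 ≤ z) {r s m : ℝ} (hr : 0 < r) (hs : 0 < s)
    (hm : 0 ≤ m) {E : Set (ℝ × ℝ)}
    (hE : ∀ x, x ∈ E ↔
      (if r * x.1 - s * x.2 ≤ (r - s) * z + m then x.1 ≤ z else s * x.2 ≤ s * z - m) ∧
      (if r * x.1 - s * x.2 ≤ -((r - s) * z) + m then -z ≤ x.1 else -m - s * z ≤ s * x.2)) :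
    1 - 2 * ν.real {x | z < x.2} ≤ ν.real E ∧
      (m = 0 → ν.real E = 1 - 2 * ν.real {x | z < x.2}) := by
  have := h.isProbabilityMeasure
  set U : Set (ℝ × ℝ) := {x | (r * x.1 - s * x.2 ≤ (r - s) * z + m ∧ z < x.1) ∨
    ((r - s) * z + m < r * x.1 - s * x.2 ∧ s * z - m < s * x.2)}
  set L : Set (ℝ × ℝ) := {x | (r * x.1 - s * x.2 ≤ -((r - s) * z) + m ∧ x.1 < -z) ∨
    (-((r - s) * z) + m < r * x.1 - s * x.2 ∧ s * x.2 < -m - s * z)}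
  set L' : Set (ℝ × ℝ) := (fun x => -x) ⁻¹' L
  set P : Set (ℝ × ℝ) := {x | z < x.1}
  set C : Set (ℝ × ℝ) :=
    {x | 0 < s * (x.2 - z) + max (-m) (min (r * (x.1 - z) - s * (x.2 - z)) m)}
  have hU : MeasurableSet U := by measurability
  have hL : MeasurableSet L := by measurability
  have hL' : MeasurableSet L' := measurable_neg hL
  have hC : MeasurableSet C := measurableSet_lt (by fun_prop) (by fun_prop)
  have hEUL : E = (U ∪ L)ᶜ := by
    ext x
    simp only [hE, U, L, Set.mem_compl_iff, Set.mem_union, Set.mem_ofPred_eq]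
    split_ifs <;> grind
  have hunion_inter : U ∪ L' = P ∪ C ∧ U ∩ L' = P ∩ C := by
    have hpos : ∀ x : ℝ × ℝ, 0 < r * (x.1 - z) ↔ z < x.1 := fun x => by
      rw [mul_pos_iff_of_pos_left hr, sub_pos]
    have hmem : ∀ x, (x ∈ U ↔ x ∈ P) ∧ (x ∈ L' ↔ x ∈ C) ∨
        (x ∈ U ↔ x ∈ C) ∧ (x ∈ L' ↔ x ∈ P) := by
      intro x
      have hx := hpos x
      simp only [U, L', P, C, L, Set.mem_preimage, Set.mem_ofPred_eq, Prod.fst_neg, Prod.snd_neg]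
      rcases lt_or_ge m (r * (x.1 - z) - s * (x.2 - z)) with h1 | h1
      · rw [min_eq_right h1.le, max_eq_right (by linarith)]
        right
        constructor <;> grind
      · rw [min_eq_left h1]
        rcases lt_or_ge (r * (x.1 - z) - s * (x.2 - z)) (-m) with h2 | h2
        · rw [max_eq_left h2.le]
          left
          constructor <;> grind
        · rw [max_eq_right h2]
          left
          constructor <;> grind
    constructor <;> ext x <;> simp only [Set.mem_union, Set.mem_inter_iff] <;>
      have := hmem x <;> tauto
  have hsum : ν.real U + ν.real L = ν.real {x | z < x.2} + ν.real C := by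
    have h1 := measureReal_union_add_inter (μ := ν) (s := U) hL'
    have h2 := measureReal_union_add_inter (μ := ν) (s := P) hC
    have h3 : ν.real L' = ν.real L := by
      rw [measureReal_def, h.neg.measure_preimage hL.nullMeasurableSet, measureReal_def]
    have h4 : ν.real P = ν.real {x | z < x.2} := by
      rw [measureReal_def, h.measure_fst_gt, measureReal_def]
    rw [hunion_inter.1, hunion_inter.2] at h1
    linarith
  rw [hEUL, measureReal_compl (hU.union hL), probReal_univ]
  constructor
  · have h1 := measureReal_union_le (μ := ν) U L
    have h2 : ν.real C ≤ ν.real {x | z < x.2} :=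
      ENNReal.toReal_mono (measure_ne_top _ _) (h.measure_clamp_le hr hs hm)
    linarith
  · rintro rfl
    have hdisj : Disjoint U L := by
      have hsz := mul_nonneg hs.le hz
      have hrz := mul_nonneg hr.le hz
      rw [Set.disjoint_left]
      rintro x (⟨h1, h2⟩ | ⟨h1, h2⟩) (⟨h3, h4⟩ | ⟨h3, h4⟩)
      · linarith
      · nlinarith [mul_lt_mul_of_pos_left h2 hr]
      · nlinarith [mul_lt_mul_of_pos_left h4 hr]
      · linarith
    have hCQ : C = {x | z < x.2} := by
      ext x
      have : max (-0) (min (r * (x.1 - z) - s * (x.2 - z)) 0) = 0 := by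
        simp
      simp only [C, this, add_zero, Set.mem_ofPred_eq]
      rw [mul_pos_iff_of_pos_left hs, sub_pos]
    rw [measureReal_union hdisj hL, hsum, hCQ]
    ring

end IsSymmPair

lemma gaussianReal_real_Ioi (z : ℝ) : (gaussianReal 0 1).real (Set.Ioi z) = 1 - stdNormalCDF z := by
  rw [← Set.compl_Iic, measureReal_compl measurableSet_Iic, probReal_univ]
  rfl

lemma nonneg_of_half_le_stdNormalCDF {z : ℝ} (h : 1 / 2 ≤ stdNormalCDF z) : 0 ≤ z := by
  by_contra! hz
  have : (gaussianReal 0 1).real (Set.Iic z) = (gaussianReal 0 1).real (Set.Ici (-z)) := by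
    conv_lhs => rw [← neg_zero, ← gaussianReal_map_neg]
    rw [map_measureReal_apply (by fun_prop) measurableSet_Iic]
    congr 1
    ext x
    simp
  have hpos : 0 < (gaussianReal 0 1).real (Set.Ioo z (-z)) := by
    refine ENNReal.toReal_pos (fun h0 => ?_) (measure_ne_top _ _)
    have := gaussianReal_absolutelyContinuous' 0 one_ne_zero h0
    simp only [Real.volume_Ioo, ENNReal.ofReal_eq_zero] at this
    linarith
  have hsplit : (gaussianReal 0 1).real (Set.Ioi z) =
      (gaussianReal 0 1).real (Set.Ioo z (-z)) + (gaussianReal 0 1).real (Set.Ici (-z)) := by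
    rw [← measureReal_union _ measurableSet_Ici, Set.Ioo_union_Ici_eq_Ioi (by linarith)]
    exact Set.disjoint_left.2 fun x h1 h2 => not_lt.2 h2 h1.2
  have h1 := gaussianReal_real_Ioi z
  have h2 : (gaussianReal 0 1).real (Set.Iic z) = stdNormalCDF z := rfl
  linarith

/-- Coverage probability of an interval whose endpoints are based on the linear functional `x`
or on the linear functional `y` of a standard Gaussian vector, according to the value of
their difference. -/
lemma coverage_dotProduct {ι : Type*} [Fintype ι] {x y : ι → ℝ} {r s m z α : ℝ}
    (hr : 0 < r) (hs : 0 < s) (hm : 0 ≤ m) (hx : x ⬝ᵥ x = r ^ 2) (hy : y ⬝ᵥ y = s ^ 2)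
    (hxy : 0 < x ⬝ᵥ y) (hz : stdNormalCDF z = 1 - α / 2) (hα : α ≤ 1) {F : Set (ι → ℝ)}
    (hF : ∀ w, w ∈ F ↔
      (if x ⬝ᵥ w - y ⬝ᵥ w ≤ (r - s) * z + m then x ⬝ᵥ w ≤ r * z else y ⬝ᵥ w ≤ s * z - m) ∧
      (if x ⬝ᵥ w - y ⬝ᵥ w ≤ -((r - s) * z) + m then -(r * z) ≤ x ⬝ᵥ w
        else -m - s * z ≤ y ⬝ᵥ w)) :
    1 - α ≤ (Measure.pi fun _ : ι => gaussianReal 0 1).real F ∧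
      (m = 0 → (Measure.pi fun _ : ι => gaussianReal 0 1).real F = 1 - α) := by
  have hz0 : 0 ≤ z := nonneg_of_half_le_stdNormalCDF (by linarith)
  have hpair := isSymmPair_map_dotProduct (v := r⁻¹ • x) (u := s⁻¹ • y)
    (by simp [hx]; field_simp) (by simp [hy]; field_simp)
    (by
      have : 0 < (r⁻¹ • x) ⬝ᵥ (s⁻¹ • y) := by
        simp only [smul_dotProduct, dotProduct_smul, smul_eq_mul]
        positivity
      linarith) hz0
  set f : (ι → ℝ) → ℝ × ℝ := fun w => ((r⁻¹ • x) ⬝ᵥ w, (s⁻¹ • y) ⬝ᵥ w)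
  have hf : Measurable f := by
    simp only [f, dotProduct]
    fun_prop
  set E : Set (ℝ × ℝ) := {x |
    (r * x.1 - s * x.2 ≤ (r - s) * z + m ∧ x.1 ≤ z ∨
      (r - s) * z + m < r * x.1 - s * x.2 ∧ s * x.2 ≤ s * z - m) ∧
    (r * x.1 - s * x.2 ≤ -((r - s) * z) + m ∧ -z ≤ x.1 ∨
      -((r - s) * z) + m < r * x.1 - s * x.2 ∧ -m - s * z ≤ s * x.2)}
  have hEm : MeasurableSet E := by measurability
  have hFE : F = f ⁻¹' E := by
    ext w
    have h1 : r * (f w).1 = x ⬝ᵥ w := by simp [f, hr.ne']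
    have h2 : s * (f w).2 = y ⬝ᵥ w := by simp [f, hs.ne']
    have h3 : x ⬝ᵥ w ≤ r * z ↔ (f w).1 ≤ z := by rw [← h1, mul_le_mul_iff_right₀ hr]
    have h4 : -(r * z) ≤ x ⬝ᵥ w ↔ -z ≤ (f w).1 := by
      rw [← h1, ← mul_neg, mul_le_mul_iff_right₀ hr]
    simp only [hF, E, Set.mem_preimage, Set.mem_ofPred_eq, h1, h2, h3, h4]
    split_ifs <;> grind
  have hcov := hpair.coverage hz0 hr hs hm (E := E) fun x => by
    simp only [E, Set.mem_ofPred_eq]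
    split_ifs <;> grind
  have htail : 1 - 2 * ((Measure.pi fun _ : ι => gaussianReal 0 1).map f).real
      {x : ℝ × ℝ | z < x.2} = 1 - α := by
    have h1 := hpair.measure_snd_preimage (B := Set.Ioi z) measurableSet_Ioi
    have h2 := gaussianReal_real_Ioi z
    rw [measureReal_def, ← h1] at h2
    rw [measureReal_def, show {x : ℝ × ℝ | z < x.2} = Prod.snd ⁻¹' Set.Ioi z from rfl, h2, hz]
    ring
  rwa [htail, map_measureReal_apply hf hEm, ← hFE] at hcov

/-- `coverage_dotProduct` for endpoints which switch according to a third linear functional `t`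
such that `x - y = ρ • t`. -/
lemma coverage_switching {ι : Type*} [Fintype ι] {x y t : ι → ℝ} {r s z α ρ β c : ℝ}
    (hr : 0 < r) (hs : 0 < s) (hx : x ⬝ᵥ x = r ^ 2) (hy : y ⬝ᵥ y = s ^ 2) (hxy : 0 < x ⬝ᵥ y)
    (hz : stdNormalCDF z = 1 - α / 2) (hα : α ≤ 1) (hxyt : x - y = ρ • t)
    (hρ0 : ρ = 0 → r = s) (hβ : β ≤ 0) (hc : ρ * c = (r - s) * z) {F : Set (ι → ℝ)}
    (hF : ∀ w, w ∈ F ↔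
      (if β + t ⬝ᵥ w ≤ c then x ⬝ᵥ w ≤ r * z else y ⬝ᵥ w ≤ s * z + ρ * β) ∧
      (if β + t ⬝ᵥ w ≤ -c then -(r * z) ≤ x ⬝ᵥ w else ρ * β - s * z ≤ y ⬝ᵥ w)) :
    1 - α ≤ (Measure.pi fun _ : ι => gaussianReal 0 1).real F ∧
      (β = 0 → (Measure.pi fun _ : ι => gaussianReal 0 1).real F = 1 - α) := by
  have hxyw : ∀ w, x ⬝ᵥ w - y ⬝ᵥ w = ρ * t ⬝ᵥ w := fun w => by
    rw [← sub_dotProduct, hxyt, smul_dotProduct, smul_eq_mul]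
  rcases lt_trichotomy ρ 0 with hρ | rfl | hρ
  · have h := coverage_dotProduct (x := -x) (y := -y) hr hs
      (mul_nonneg_of_nonpos_of_nonpos hρ.le hβ) (by simpa using hx) (by simpa using hy)
      (by simpa using hxy) hz hα (F := F) fun w => by
        have h1 : β + t ⬝ᵥ w ≤ c ↔
            -(x ⬝ᵥ w) - -(y ⬝ᵥ w) ≤ -((r - s) * z) + ρ * β := by
          rw [← mul_le_mul_left_of_neg hρ, hc]
          constructor <;> intro <;> linarith [hxyw w]
        have h2 : β + t ⬝ᵥ w ≤ -c ↔
            -(x ⬝ᵥ w) - -(y ⬝ᵥ w) ≤ (r - s) * z + ρ * β := by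
          rw [← mul_le_mul_left_of_neg hρ, mul_neg, hc]
          constructor <;> intro <;> linarith [hxyw w]
        simp only [hF, h1, h2, neg_dotProduct]
        clear hF h1 h2
        split_ifs <;> constructor <;> rintro ⟨h3, h4⟩ <;> constructor <;> linarith
    exact ⟨h.1, fun h0 => h.2 (by simp [h0])⟩
  · obtain rfl := hρ0 rfl
    have h := coverage_dotProduct hr hs le_rfl hx hy hxy hz hα (F := F) fun w => by
      have h1 : y ⬝ᵥ w = x ⬝ᵥ w := by linarith [hxyw w]
      simp only [hF, h1]
      clear hF
      split_ifs <;> constructor <;> rintro ⟨h3, h4⟩ <;> constructor <;> linarith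
    exact ⟨h.1, fun _ => h.2 rfl⟩
  · have h := coverage_dotProduct hr hs (m := -(ρ * β))
      (neg_nonneg.2 (mul_nonpos_of_nonneg_of_nonpos hρ.le hβ)) hx hy hxy hz hα (F := F)
      fun w => by
        have h1 : β + t ⬝ᵥ w ≤ c ↔
            x ⬝ᵥ w - y ⬝ᵥ w ≤ (r - s) * z + -(ρ * β) := by
          rw [← mul_le_mul_iff_right₀ hρ, hc]
          constructor <;> intro <;> linarith [hxyw w]
        have h2 : β + t ⬝ᵥ w ≤ -c ↔
            x ⬝ᵥ w - y ⬝ᵥ w ≤ -((r - s) * z) + -(ρ * β) := by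
          rw [← mul_le_mul_iff_right₀ hρ, mul_neg, hc]
          constructor <;> intro <;> linarith [hxyw w]
        simp only [hF, h1, h2]
        clear hF h1 h2
        split_ifs <;> constructor <;> rintro ⟨h3, h4⟩ <;> constructor <;> linarith
    exact ⟨h.1, fun h0 => h.2 (by simp [h0])⟩

/-- Theorem 2 (finite-sample validity of the IICI): if θ̂ ~ N(θ₀, V/n) with V positive
definite, g(θ) = a'θ + b with a not a scalar multiple of e₁, and g(θ₀) ≤ 0, then the
inequality-imposed confidence interval [ℓ, u] covers e₁'θ₀ with probability at least
1 − α, with equality if g(θ₀) = 0. The distribution N(θ₀, V/n) is represented as the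
law of θ₀ + A·w for w with i.i.d. standard normal coordinates and A·Aᵀ = n⁻¹V. -/
theorem stmt12 (k n : ℕ) (hk : 0 < k) (hn : 0 < n)
    (V A : Matrix (Fin k) (Fin k) ℝ) (hV : V.PosDef)
    (hA : A * A.transpose = ((n : ℝ)⁻¹) • V)
    (θ₀ a e₁ : Fin k → ℝ) (b α z : ℝ)
    (he₁ : e₁ = fun i : Fin k => if (i : ℕ) = 0 then (1:ℝ) else 0)
    (ha : ∀ c : ℝ, a ≠ c • e₁)
    (hα : α ∈ Set.Icc (0:ℝ) 1)
    (hz : stdNormalCDF z = 1 - α / 2)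
    (g : (Fin k → ℝ) → ℝ) (hg : ∀ θ, g θ = a ⬝ᵥ θ + b)
    (hg0 : g θ₀ ≤ 0)
    (shat sddot cddot : ℝ)
    (hshat : shat = Real.sqrt ((n : ℝ)⁻¹ * (e₁ ⬝ᵥ V.mulVec e₁)))
    (hsddot : sddot = Real.sqrt ((n : ℝ)⁻¹ *
      (e₁ ⬝ᵥ V.mulVec e₁ -
        (e₁ ⬝ᵥ V.mulVec a) * (a ⬝ᵥ V.mulVec a)⁻¹ * (a ⬝ᵥ V.mulVec e₁))))
    (hcddot : cddot = if e₁ ⬝ᵥ V.mulVec a ≠ 0 then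
      (e₁ ⬝ᵥ V.mulVec a)⁻¹ * (a ⬝ᵥ V.mulVec a) * (shat - sddot) * z else 0)
    (θdd : (Fin k → ℝ) → (Fin k → ℝ))
    (hθdd : ∀ θ, θdd θ = θ - ((a ⬝ᵥ V.mulVec a)⁻¹ * g θ) • V.mulVec a)
    (ℓ u : (Fin k → ℝ) → ℝ)
    (hℓ : ∀ θ, ℓ θ = if g θ ≤ cddot then e₁ ⬝ᵥ θ - shat * z
      else e₁ ⬝ᵥ θdd θ - sddot * z)
    (hu : ∀ θ, u θ = if g θ ≤ -cddot then e₁ ⬝ᵥ θ + shat * z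
      else e₁ ⬝ᵥ θdd θ + sddot * z)
    (μ : Measure (Fin k → ℝ))
    (hμ : μ = Measure.map (fun w => θ₀ + A.mulVec w)
      (Measure.pi fun _ : Fin k => gaussianReal 0 1)) :
    1 - α ≤ (μ {θ | ℓ θ ≤ e₁ ⬝ᵥ θ₀ ∧ e₁ ⬝ᵥ θ₀ ≤ u θ}).toReal ∧
    (g θ₀ = 0 → (μ {θ | ℓ θ ≤ e₁ ⬝ᵥ θ₀ ∧ e₁ ⬝ᵥ θ₀ ≤ u θ}).toReal = 1 - α) := by

  have hn' : 0 < (n : ℝ)⁻¹ := by positivity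
  have hdot : ∀ x w, x ⬝ᵥ A.mulVec w = (x ᵥ* A) ⬝ᵥ w := fun x w => dotProduct_mulVec x A w
  have hgram : ∀ x y, (x ᵥ* A) ⬝ᵥ (y ᵥ* A) = (n : ℝ)⁻¹ * (x ⬝ᵥ V.mulVec y) := fun x y => by
    rw [← hdot, ← mulVec_transpose, mulVec_mulVec, hA, smul_mulVec, dotProduct_smul, smul_eq_mul]
  have hsymm : ∀ x y, x ⬝ᵥ V.mulVec y = y ⬝ᵥ V.mulVec x := fun x y => by
    have hVT : Vᵀ = V := hV.isHermitian
    rw [dotProduct_mulVec, dotProduct_comm, ← mulVec_transpose, hVT]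
  have hpos : ∀ x, x ≠ 0 → 0 < x ⬝ᵥ V.mulVec x := fun x hx => by
    simpa using hV.dotProduct_mulVec_pos hx
  have he0 : e₁ ≠ 0 := fun h => by
    have := congrFun h ⟨0, hk⟩
    simp [he₁] at this
  have ha0 : a ≠ 0 := by simpa using ha 0
  set E := e₁ ⬝ᵥ V.mulVec e₁
  set κ := e₁ ⬝ᵥ V.mulVec a
  set Q := a ⬝ᵥ V.mulVec a
  have hE : 0 < E := hpos _ he0
  have hQ : 0 < Q := hpos _ ha0
  set ρ := κ * Q⁻¹
  have hρQ : ρ * Q = κ := by simp [ρ, hQ.ne']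
  have hd0 : e₁ - ρ • a ≠ 0 := fun h => by
    have h1 : e₁ = ρ • a := sub_eq_zero.1 h
    have hρ : ρ ≠ 0 := fun h2 => he0 (by simpa [h2] using h1)
    exact ha ρ⁻¹ (by rw [h1, smul_smul, inv_mul_cancel₀ hρ, one_smul])
  have hD : (e₁ - ρ • a) ⬝ᵥ V.mulVec (e₁ - ρ • a) = E - κ * Q⁻¹ * κ := by
    simp only [mulVec_sub, mulVec_smul, sub_dotProduct, dotProduct_sub, smul_dotProduct,
      dotProduct_smul, smul_eq_mul, hsymm a e₁]
    linear_combination ρ * hρQ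
  have hED : e₁ ⬝ᵥ V.mulVec (e₁ - ρ • a) = E - κ * Q⁻¹ * κ := by
    simp only [mulVec_sub, mulVec_smul, dotProduct_sub, dotProduct_smul, smul_eq_mul]
    rfl
  have hDpos : 0 < E - κ * Q⁻¹ * κ := hD ▸ hpos _ hd0
  rw [hsymm a e₁] at hsddot
  have hr : 0 < shat := by rw [hshat]; positivity
  have hs : 0 < sddot := by rw [hsddot]; positivity
  set x := e₁ ᵥ* A
  set y := (e₁ - ρ • a) ᵥ* A
  have hx : x ⬝ᵥ x = shat ^ 2 := by rw [hgram, hshat, Real.sq_sqrt (by positivity)]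
  have hy : y ⬝ᵥ y = sddot ^ 2 := by rw [hgram, hsddot, hD, Real.sq_sqrt (by positivity)]
  have hxy : 0 < x ⬝ᵥ y := by rw [hgram, hED]; positivity
  have hdotm : ∀ x : Fin k → ℝ, Measurable fun θ => x ⬝ᵥ θ := fun x => by
    unfold dotProduct
    fun_prop
  have hθdd' : ∀ θ, e₁ ⬝ᵥ θdd θ = e₁ ⬝ᵥ θ - ρ * g θ := fun θ => by
    rw [hθdd, dotProduct_sub, dotProduct_smul, smul_eq_mul]
    ring
  have hgm : Measurable g := by
    rw [funext hg]
    exact (hdotm a).add_const b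
  have hℓm : Measurable ℓ := by
    simp only [funext hℓ, hθdd']
    exact Measurable.ite (measurableSet_le hgm measurable_const) ((hdotm e₁).sub_const _)
      (((hdotm e₁).sub (hgm.const_mul ρ)).sub_const _)
  have hum : Measurable u := by
    simp only [funext hu, hθdd']
    exact Measurable.ite (measurableSet_le hgm measurable_const) ((hdotm e₁).add_const _)
      (((hdotm e₁).sub (hgm.const_mul ρ)).add_const _)
  have hS : MeasurableSet {θ | ℓ θ ≤ e₁ ⬝ᵥ θ₀ ∧ e₁ ⬝ᵥ θ₀ ≤ u θ} :=
    (measurableSet_le hℓm measurable_const).inter (measurableSet_le measurable_const hum)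
  have hmap : Measurable fun w => θ₀ + A.mulVec w := by
    refine measurable_const.add (measurable_pi_lambda _ fun i => ?_)
    exact hdotm (A i)
  rw [hμ, Measure.map_apply hmap hS, ← measureReal_def]
  set F := (fun w => θ₀ + A.mulVec w) ⁻¹' {θ | ℓ θ ≤ e₁ ⬝ᵥ θ₀ ∧ e₁ ⬝ᵥ θ₀ ≤ u θ}
  have hF : ∀ w, w ∈ F ↔
      (if g θ₀ + (a ᵥ* A) ⬝ᵥ w ≤ cddot then x ⬝ᵥ w ≤ shat * z
        else y ⬝ᵥ w ≤ sddot * z + ρ * g θ₀) ∧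
      (if g θ₀ + (a ᵥ* A) ⬝ᵥ w ≤ -cddot then -(shat * z) ≤ x ⬝ᵥ w
        else ρ * g θ₀ - sddot * z ≤ y ⬝ᵥ w) := fun w => by
    have hyw : y ⬝ᵥ w = x ⬝ᵥ w - ρ * (a ᵥ* A) ⬝ᵥ w := by
      simp [x, y, sub_vecMul, smul_vecMul, sub_dotProduct]
    have hgw : g (θ₀ + A.mulVec w) = g θ₀ + (a ᵥ* A) ⬝ᵥ w := by
      rw [hg, hg, dotProduct_add, hdot]
      ring
    simp only [F, Set.mem_preimage, Set.mem_ofPred_eq, hℓ, hu, hθdd', hgw, dotProduct_add, hdot,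
      hyw]
    split_ifs <;> grind
  have hxya : x - y = ρ • (a ᵥ* A) := by simp [x, y, sub_vecMul, smul_vecMul]
  have hρ0 : ρ = 0 → shat = sddot := fun hρ => by simp [hshat, hsddot, hρ]
  have hc : ρ * cddot = (shat - sddot) * z := by
    rcases eq_or_ne κ 0 with hκ | hκ
    · have hρ : ρ = 0 := by simp [ρ, hκ]
      simp [hρ, hρ0 hρ]
    · rw [hcddot, if_pos hκ]
      simp only [ρ]
      field_simp
  exact coverage_switching hr hs hx hy hxy hz hα.2 hxya hρ0 hg0 hc hF
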